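/- arXiv:0705.3949 — 2 statements merged into one kernel-verified Lean document; each statement's English description precedes it below -/
import Mathlib

section
/- Fix a model-state pair M,Γ. For any two object terms t₁, t₂, any assignment v, and the object constant i identifying the state Γ in Sta (i.e. I(i) = (v*I)(↓id,Γ)), the following holds: (v*I)(t₁,Γ) ≠ (v*I)(t₂,Γ) if and only if ⟨v(ϱ₁),…,v(ϱₙ), i⟩ ∈ FT((t₁≠t₂)(ϱ₁,…,ϱₙ))(I_M), where ϱ₁,…,ϱₙ is the list of variables occurring in t₁,t₂. -/
namespace KripkeDB

/-- Variable kinds: object variables and concept variables. -/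
inductive VKind : Type
  | obj : VKind
  | con : VKind

/-- A first-order modal model: an augmented frame `⟨G, {R_π}, D_o, D_c⟩` together with an
interpretation `I`.  `State` is the nonempty set of states, `acc r` is the accessibility
relation `R_r` for each relation symbol `r : RelSym`, `Obj` is the nonempty object domain
`D_o`, and the `m` individual concepts (functions from states to objects, `m = |D_c|`)
are indexed by `Fin m` via the bijection `𝔠` (0-based: the concept indexed by `i` has
`𝔠`-value `i+1`).  The concept indexed by `0` is the distinguished concept `id`
(so `𝔠(id) = 1`), whose value uniquely identifies each state.  By the unique names
assumption, constants are identified with the objects/concepts they denote. -/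
structure Model where
  State : Type
  state_ne : Nonempty State
  Obj : Type
  obj_ne : Nonempty Obj
  RelSym : Type
  acc : RelSym → State → State → Prop
  m : ℕ
  m_pos : 0 < m
  concept : Fin m → State → Obj
  id_inj : ∀ Γ Δ : State, concept ⟨0, m_pos⟩ Γ = concept ⟨0, m_pos⟩ Δ → Γ = Δ

/-- Database values: the domain **dom** = D_o ∪ D_c ∪ Π consists of objects,
concept names and accessibility-relation names. -/
abbrev V (M : Model) : Type := M.Obj ⊕ (Fin M.m ⊕ M.RelSym)

/-- The id-value of a state: `(v*I)(↓id, Γ)`. -/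
def idval (M : Model) (Γ : M.State) : M.Obj := M.concept ⟨0, M.m_pos⟩ Γ

/-- A relation instance: a set of tuples over the database domain. -/
abbrev Inst (M : Model) : Type := Set (List (V M))

noncomputable def deflt (M : Model) : V M := Sum.inl (Classical.choice M.obj_ne)

/-- 1-based attribute access `t(j)`. -/
noncomputable def att (M : Model) (t : List (V M)) (j : ℕ) : V M := t.getD (j - 1) (deflt M)

/-- Projection `π_{j₁,…,jₚ}`. -/
noncomputable def proj (M : Model) (js : List ℕ) (I : Inst M) : Inst M :=
  { u | ∃ t ∈ I, u = js.map (att M t) }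

/-- Selection `σ_{j=k}` (attribute `j` equals attribute `k`). -/
noncomputable def selEq (M : Model) (j k : ℕ) (I : Inst M) : Inst M :=
  { t | t ∈ I ∧ att M t j = att M t k }

/-- Selection `σ_{j=c}` (attribute `j` equals the constant `c`). -/
noncomputable def selC (M : Model) (j : ℕ) (c : V M) (I : Inst M) : Inst M :=
  { t | t ∈ I ∧ att M t j = c }

/-- Cross product `I × J`. -/
def cprod (M : Model) (I J : Inst M) : Inst M :=
  { l | ∃ t ∈ I, ∃ u ∈ J, l = t ++ u }

/-- The `Sta`-tuple of a state `Γ`: its `i`-th entry is the value at `Γ` of the concept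
with `𝔠`-value `i`. -/
def staTuple (M : Model) (Γ : M.State) : List (V M) :=
  List.ofFn (fun i : Fin M.m => Sum.inl (M.concept i Γ))

/-- The instance of the relation `Sta` in the database instance `I_M` associated with `M`. -/
def Sta (M : Model) : Inst M := { l | ∃ Γ : M.State, l = staTuple M Γ }

/-- The instance of the unary relation `Obj` (instance `D_o`) in `I_M`. -/
def ObjI (M : Model) : Inst M := { l | ∃ o : M.Obj, l = [Sum.inl o] }

/-- The instance of the unary relation `Con` (instance `D_c`) in `I_M`. -/
def ConI (M : Model) : Inst M := { l | ∃ c : Fin M.m, l = [Sum.inr (Sum.inl c)] }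

/-- The instance of the ternary relation `Rel` in `I_M`: it contains `⟨a,b,π⟩` iff
`R_π(Γ,Δ)` where `a,b` are the id-values of `Γ,Δ`. -/
def RelI (M : Model) : Inst M :=
  { l | ∃ (r : M.RelSym) (Γ Δ : M.State), M.acc r Γ Δ ∧
      l = [Sum.inl (idval M Γ), Sum.inl (idval M Δ), Sum.inr (Sum.inr r)] }

/-- Membership of a database value in the domain of a variable kind
(`D_o` for object variables, `D_c` for concept variables). -/
def kindOk (M : Model) : VKind → V M → Prop
  | VKind.obj, x => ∃ o : M.Obj, x = Sum.inl o
  | VKind.con, x => ∃ c : Fin M.m, x = Sum.inr (Sum.inl c)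

/-- `VT(ϱ₁,…,ϱₙ)`: the cross product `D₁ × … × Dₙ` of the domain relations, where `Dᵢ`
is `Con` for a concept variable and `Obj` for an object variable
(for the empty list this is `{⟨⟩}`). -/
def VTl (M : Model) (ks : List VKind) : Inst M :=
  { l | List.Forall₂ (kindOk M) ks l }

/-- Object terms: object constants (identified with objects via unique names),
object variables (de Bruijn index `k` denotes the variable `ϱ_{k+1}`), and
relativized concept terms `↓c` for a concept constant `c`. -/
inductive OTm (M : Model) : Type
  | const : M.Obj → OTm M
  | var : ℕ → OTm M
  | down : Fin M.m → OTm M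

/-- Term evaluation `(v*I)(·, Γ)`. -/
def teval (M : Model) (v : ℕ → V M) (Γ : M.State) : OTm M → V M
  | OTm.const o => Sum.inl o
  | OTm.var k => v k
  | OTm.down c => Sum.inl (M.concept c Γ)

/-- The result of the term translation `TT`: an attribute index or a constant. -/
inductive TTRes (M : Model) : Type
  | idx : ℕ → TTRes M
  | con : V M → TTRes M

/-- The term translation `TT` with `n` variables in scope: `TT(c) = 'c'` for an object
constant, `TT(ϱ_k) = k`, and `TT(↓t) = n + 𝔠(t)` for a relativized term. -/
def TT (M : Model) (n : ℕ) : OTm M → TTRes M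
  | OTm.const o => TTRes.con (Sum.inl o)
  | OTm.var k => TTRes.idx (k + 1)
  | OTm.down c => TTRes.idx (n + (c.val + 1))

/-- The value in tuple `t` designated by a `TT`-result. -/
noncomputable def ttval (M : Model) (t : List (V M)) : TTRes M → V M
  | TTRes.idx j => att M t j
  | TTRes.con c => c

/-- Generalized selection `σ_{a=b}` where each side is an attribute index or a constant. -/
noncomputable def selT (M : Model) (a b : TTRes M) (I : Inst M) : Inst M :=
  { t | t ∈ I ∧ ttval M t a = ttval M t b }

/-- Generalized selection `σ_{a≠b}`. -/
noncomputable def selTne (M : Model) (a b : TTRes M) (I : Inst M) : Inst M :=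
  { t | t ∈ I ∧ ttval M t a ≠ ttval M t b }

/-- The set of (indices of) variables occurring in a term. -/
def tvars (M : Model) : OTm M → Set ℕ
  | OTm.var k => {k}
  | _ => ∅

/-- Formulas of the modal language.  Binders (`ex`, `all`, `lam`) bind the de Bruijn
variable `0`; in `⟨λϱ.φ⟩(↓c)` the abstracted variable is an object variable and the
argument term is the relativized concept term `↓c`. -/
inductive Fma (M : Model) : Type
  | eq : OTm M → OTm M → Fma M
  | ne : OTm M → OTm M → Fma M
  | not : Fma M → Fma M
  | and : Fma M → Fma M → Fma M
  | or : Fma M → Fma M → Fma M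
  | dia : M.RelSym → Fma M → Fma M
  | box : M.RelSym → Fma M → Fma M
  | ex : VKind → Fma M → Fma M
  | all : VKind → Fma M → Fma M
  | lam : Fin M.m → Fma M → Fma M

/-- Extending an assignment with a value for the freshly bound variable. -/
def consA (M : Model) (d : V M) (v : ℕ → V M) : ℕ → V M
  | 0 => d
  | k + 1 => v k

/-- Truth in a model: `M,Γ ⊩_v φ`. -/
def Truth (M : Model) : M.State → (ℕ → V M) → Fma M → Prop
  | Γ, v, Fma.eq t₁ t₂ => teval M v Γ t₁ = teval M v Γ t₂
  | Γ, v, Fma.ne t₁ t₂ => teval M v Γ t₁ ≠ teval M v Γ t₂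
  | Γ, v, Fma.not φ => ¬ Truth M Γ v φ
  | Γ, v, Fma.and φ ψ => Truth M Γ v φ ∧ Truth M Γ v ψ
  | Γ, v, Fma.or φ ψ => Truth M Γ v φ ∨ Truth M Γ v ψ
  | Γ, v, Fma.dia r φ => ∃ Δ : M.State, M.acc r Γ Δ ∧ Truth M Δ v φ
  | Γ, v, Fma.box r φ => ∀ Δ : M.State, M.acc r Γ Δ → Truth M Δ v φ
  | Γ, v, Fma.ex k φ => ∃ d : V M, kindOk M k d ∧ Truth M Γ (consA M d v) φ
  | Γ, v, Fma.all k φ => ∀ d : V M, kindOk M k d → Truth M Γ (consA M d v) φ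
  | Γ, v, Fma.lam c φ => Truth M Γ (consA M (Sum.inl (M.concept c Γ)) v) φ

/-- The translation `FT` of modal queries into relational algebra queries, evaluated on
`I_M`.  `ks` is the list of kinds of the free variables `ϱ₁,…,ϱₙ` (so `n = ks.length`).
The box clause is `FT([π]φ) = FT(¬⟨π⟩¬φ)`, written out. -/
noncomputable def FT (M : Model) : List VKind → Fma M → Inst M
  | ks, Fma.eq t₁ t₂ =>
      proj M (List.range' 1 (ks.length + 1))
        (selT M (TT M ks.length t₁) (TT M ks.length t₂) (cprod M (VTl M ks) (Sta M)))
  | ks, Fma.ne t₁ t₂ =>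
      proj M (List.range' 1 (ks.length + 1))
        (selTne M (TT M ks.length t₁) (TT M ks.length t₂) (cprod M (VTl M ks) (Sta M)))
  | ks, Fma.not φ =>
      cprod M (VTl M ks) (proj M [1] (Sta M)) \ FT M ks φ
  | ks, Fma.and φ ψ => FT M ks φ ∩ FT M ks ψ
  | ks, Fma.or φ ψ => FT M ks φ ∪ FT M ks ψ
  | ks, Fma.dia r φ =>
      proj M (List.range' 1 ks.length ++ [ks.length + 2])
        (selC M (ks.length + 4) (Sum.inr (Sum.inr r))
          (selEq M (ks.length + 1) (ks.length + 3) (cprod M (FT M ks φ) (RelI M))))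
  | ks, Fma.box r φ =>
      cprod M (VTl M ks) (proj M [1] (Sta M)) \
        proj M (List.range' 1 ks.length ++ [ks.length + 2])
          (selC M (ks.length + 4) (Sum.inr (Sum.inr r))
            (selEq M (ks.length + 1) (ks.length + 3)
              (cprod M (cprod M (VTl M ks) (proj M [1] (Sta M)) \ FT M ks φ) (RelI M))))
  | ks, Fma.ex k φ =>
      proj M (List.range' 2 (ks.length + 1)) (FT M (k :: ks) φ)
  | ks, Fma.all k φ =>
      proj M (List.range' 2 (ks.length + 1)) (FT M (k :: ks) φ) \
        proj M (List.range' 2 (ks.length + 1))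
          (cprod M (VTl M [k]) (proj M (List.range' 2 (ks.length + 1)) (FT M (k :: ks) φ)) \
            FT M (k :: ks) φ)
  | ks, Fma.lam c φ =>
      proj M (List.range' 2 (ks.length + 1))
        (selEq M 1 (ks.length + 3)
          (selEq M (ks.length + 2) (ks.length + 4)
            (cprod M (FT M (VKind.obj :: ks) φ) (proj M [c.val + 1, 1] (Sta M)))))

/-- Well-formedness of a term in a context of variable kinds. -/
def WFt (M : Model) (ks : List VKind) : OTm M → Prop
  | OTm.const _ => True
  | OTm.var k => ks[k]? = some VKind.obj
  | OTm.down _ => True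

/-- Well-formedness of a formula in a context of variable kinds: a modal query
`φ(ϱ₁,…,ϱₙ)` is a well-formed formula whose free variables are among `ϱ₁,…,ϱₙ`. -/
def WF (M : Model) : List VKind → Fma M → Prop
  | ks, Fma.eq t₁ t₂ => WFt M ks t₁ ∧ WFt M ks t₂
  | ks, Fma.ne t₁ t₂ => WFt M ks t₁ ∧ WFt M ks t₂
  | ks, Fma.not φ => WF M ks φ
  | ks, Fma.and φ ψ => WF M ks φ ∧ WF M ks ψ
  | ks, Fma.or φ ψ => WF M ks φ ∧ WF M ks ψ
  | ks, Fma.dia _ φ => WF M ks φ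
  | ks, Fma.box _ φ => WF M ks φ
  | ks, Fma.ex k φ => WF M (k :: ks) φ
  | ks, Fma.all k φ => WF M (k :: ks) φ
  | ks, Fma.lam _ φ => WF M (VKind.obj :: ks) φ

/-- An assignment conforms to a context of kinds if it maps object variables into `D_o`
and concept variables into `D_c`. -/
def Conf (M : Model) (ks : List VKind) (v : ℕ → V M) : Prop :=
  ∀ k : Fin ks.length, kindOk M (ks.get k) (v k)

/-!
The id-value of a state determines its whole `Sta`-tuple, so `π_{1,…,n+1}` loses nothing on a
subset of `VT(ϱ₁,…,ϱₙ) × Sta`: the tuple `⟨v(ϱ₁),…,v(ϱₙ), i⟩` lies in the projection exactly when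
`⟨v(ϱ₁),…,v(ϱₙ)⟩` followed by the `Sta`-tuple of `Γ` survives the selection. On that long tuple
the attribute designated by `TT(t)` holds the value of `t` at `Γ`.
-/

section Attributes

variable {M : Model}

theorem att_append_left {a : List (V M)} (b : List (V M)) {k : ℕ} (hk : k < a.length) :
    att M (a ++ b) (k + 1) = a[k] := by
  simp [att, List.getElem?_append_left hk, hk]

theorem att_append_right (a b : List (V M)) (k : ℕ) :
    att M (a ++ b) (a.length + (k + 1)) = att M b (k + 1) := by
  simp [att, ← add_assoc, List.getElem?_append_right]

theorem att_staTuple (Γ : M.State) (c : Fin M.m) :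
    att M (staTuple M Γ) (c + 1) = Sum.inl (M.concept c Γ) := by
  simp [att, staTuple]

theorem map_att_range'_append_left (a b : List (V M)) :
    (List.range' 1 a.length).map (att M (a ++ b)) = a := by
  refine List.ext_getElem (by simp) fun k _ hk => ?_
  rw [List.getElem_map, List.getElem_range', one_mul, add_comm, att_append_left b hk]

theorem map_att_range'_append_staTuple (a : List (V M)) (Γ : M.State) :
    (List.range' 1 (a.length + 1)).map (att M (a ++ staTuple M Γ)) =
      a ++ [Sum.inl (idval M Γ)] := by
  have id_column : att M (a ++ staTuple M Γ) (a.length + 1) = Sum.inl (idval M Γ) :=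
    (att_append_right a _ 0).trans (att_staTuple Γ ⟨0, M.m_pos⟩)
  rw [List.range'_1_concat, List.map_append, map_att_range'_append_left, List.map_singleton,
    add_comm 1, id_column]

end Attributes

section Projection

variable {M : Model} {n : ℕ} {S : Inst M}

theorem append_idval_mem_proj_iff (hS : S ⊆ cprod M {a | a.length = n} (Sta M))
    (a : List (V M)) (Γ : M.State) :
    a ++ [Sum.inl (idval M Γ)] ∈ proj M (List.range' 1 (n + 1)) S ↔ a ++ staTuple M Γ ∈ S := by
  constructor
  · rintro ⟨t, htS, hproj⟩
    obtain ⟨b, rfl, _, ⟨Δ, rfl⟩, rfl⟩ := hS htS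
    rw [map_att_range'_append_staTuple] at hproj
    obtain ⟨rfl, hid⟩ := List.append_inj' hproj rfl
    obtain rfl : Γ = Δ := M.id_inj Γ Δ (Sum.inl_injective (List.singleton_injective hid))
    exact htS
  · intro haS
    have ha : a.length = n := by
      obtain ⟨b, rfl, _, ⟨Δ, rfl⟩, happ⟩ := hS haS
      exact congrArg List.length (List.append_inj_left' happ (by simp [staTuple]))
    exact ⟨_, haS, by rw [← ha, map_att_range'_append_staTuple]⟩

theorem selTne_VTl_Sta_subset (ks : List VKind) (a b : TTRes M) :
    selTne M a b (cprod M (VTl M ks) (Sta M)) ⊆ cprod M {l | l.length = ks.length} (Sta M) := by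
  rintro _ ⟨⟨l, hl, s, hs, rfl⟩, -⟩
  exact ⟨l, (List.Forall₂.length_eq hl).symm, s, hs, rfl⟩

end Projection

section Assignments

variable {M : Model}

/-- The tuple `⟨v(ϱ₁),…,v(ϱₙ)⟩` of values of the first `n` variables; the variable `ϱ_{k+1}` has
index `k`. -/
def varTuple (v : ℕ → V M) (n : ℕ) : List (V M) := List.ofFn fun k : Fin n => v k

theorem length_varTuple (v : ℕ → V M) (n : ℕ) : (varTuple v n).length = n :=
  List.length_ofFn

theorem varTuple_mem_VTl_iff {ks : List VKind} {v : ℕ → V M} :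
    varTuple v ks.length ∈ VTl M ks ↔ Conf M ks v := by
  simp [VTl, Conf, varTuple, List.forall₂_iff_get, Fin.forall_iff]

theorem ttval_TT_eq_teval (v : ℕ → V M) (Γ : M.State) {n : ℕ} {t : OTm M}
    (ht : tvars M t ⊆ Set.Iio n) :
    ttval M (varTuple v n ++ staTuple M Γ) (TT M n t) = teval M v Γ t := by
  cases t with
  | const o => rfl
  | var k =>
    have hk : k < (varTuple v n).length := (length_varTuple v n).symm ▸ ht rfl
    exact (att_append_left _ hk).trans (by simp [varTuple, teval])
  | down c =>
    have concept_column := att_append_right (varTuple v n) (staTuple M Γ) c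
    rw [length_varTuple] at concept_column
    exact concept_column.trans (att_staTuple Γ c)

end Assignments

theorem atomic_ne_correspondence_general {M : Model} (Γ : M.State) {ks : List VKind}
    {t₁ t₂ : OTm M} (hvars : tvars M t₁ ∪ tvars M t₂ ⊆ Set.Iio ks.length)
    {v : ℕ → V M} (hv : Conf M ks v) :
    Truth M Γ v (Fma.ne t₁ t₂) ↔
      varTuple v ks.length ++ [Sum.inl (idval M Γ)] ∈ FT M ks (Fma.ne t₁ t₂) := by
  obtain ⟨hvars₁, hvars₂⟩ := Set.union_subset_iff.mp hvars
  have hmem : varTuple v ks.length ++ staTuple M Γ ∈ cprod M (VTl M ks) (Sta M) :=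
    ⟨_, varTuple_mem_VTl_iff.mpr hv, _, ⟨Γ, rfl⟩, rfl⟩
  rw [FT, append_idval_mem_proj_iff (selTne_VTl_Sta_subset ks _ _), selTne, Set.mem_ofPred_eq,
    ttval_TT_eq_teval v Γ hvars₁, ttval_TT_eq_teval v Γ hvars₂, and_iff_right hmem, Truth]

/-- Fix a model-state pair `M,Γ`.  For object terms `t₁, t₂`, an
assignment `v`, and the object constant `i` identifying `Γ` in `Sta`
(`I(i) = (v*I)(↓id,Γ)`): `(v*I)(t₁,Γ) ≠ (v*I)(t₂,Γ)` iff
`⟨v(ϱ₁),…,v(ϱₙ), i⟩ ∈ FT((t₁≠t₂)(ϱ₁,…,ϱₙ))(I_M)`, where `ϱ₁,…,ϱₙ` is the list of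
variables occurring in `t₁,t₂` (de Bruijn indices `0,…,n-1`) and
`FT((t₁≠t₂)(ϱ₁,…,ϱₙ)) = π_{1,…,n+1} σ_{TT(t₁)≠TT(t₂)} (VT(ϱ₁,…,ϱₙ) × Sta)`. -/
theorem atomic_ne_correspondence (M : Model) (Γ : M.State) (n : ℕ) (t₁ t₂ : OTm M)
    (hvars : tvars M t₁ ∪ tvars M t₂ = {k : ℕ | k < n})
    (v : ℕ → M.Obj) (i : M.Obj) (hi : i = idval M Γ) :
    teval M (fun k => Sum.inl (v k)) Γ t₁ ≠ teval M (fun k => Sum.inl (v k)) Γ t₂ ↔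
      (List.ofFn (fun j : Fin n => (Sum.inl (v j) : V M)) ++ [Sum.inl i]) ∈
        proj M (List.range' 1 (n + 1))
          (selTne M (TT M n t₁) (TT M n t₂)
            (cprod M (VTl M (List.replicate n VKind.obj)) (Sta M))) := by
  have hconf : Conf M (List.replicate n VKind.obj) fun k => Sum.inl (v k) := by simp [Conf, kindOk]
  have correspondence :=
    atomic_ne_correspondence_general Γ (by rw [hvars, List.length_replicate]; rfl) hconf
  rwa [FT, List.length_replicate, ← hi] at correspondence

end KripkeDB
end

section
/- Let φ(ϱ₁,…,ϱₙ) be a modal query, π ∈ Π an accessibility relation symbol, and suppose (inductive hypothesis) that for every state Δ and assignment v: M,Δ ⊩_v φ iff ⟨v(ϱ₁),…,v(ϱₙ), id_Δ⟩ ∈ FT(φ(ϱ₁,…,ϱₙ))(I_M). Then for every state Γ and assignment v: M,Γ ⊩_v [π]φ(ϱ₁,…,ϱₙ) iff ⟨v(ϱ₁),…,v(ϱₙ), id_Γ⟩ ∈ FT(¬⟨π⟩¬φ(ϱ₁,…,ϱₙ))(I_M), where FT([π]φ(ϱ₁,…,ϱₙ)) is defined as FT(¬⟨π⟩¬φ(ϱ₁,…,ϱₙ)).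 -/
namespace KripkeDB

section

variable {M : Model}

/-- The clause `FT(¬ψ) = (VT(ϱ₁,…,ϱₙ) × π₁(Sta)) − FT(ψ)` as an operation on `F = FT(ψ)(I_M)`,
where `ks` lists the kinds of `ϱ₁,…,ϱₙ`. -/
def ftNot (ks : List VKind) (F : Inst M) : Inst M :=
  cprod M (VTl M ks) (proj M [1] (Sta M)) \ F

/-- The clause `FT(⟨π⟩ψ) = π_{1,…,n,n+2} σ_{n+4=π ∧ n+1=n+3}(FT(ψ) × Rel)` as an operation on
`F = FT(ψ)(I_M)`, where `r` is the relation symbol `π`. -/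
def ftDia (n : ℕ) (r : M.RelSym) (F : Inst M) : Inst M :=
  proj M (List.range' 1 n ++ [n + 2])
    (selC M (n + 4) (Sum.inr (Sum.inr r)) (selEq M (n + 1) (n + 3) (cprod M F (RelI M))))

theorem map_att_range'_append (l s : List (V M)) :
    (List.range' 1 l.length).map (att M (l ++ s)) = l := by
  refine List.ext_getElem (by simp) fun i _ hi => ?_
  simp [att, List.getElem?_append_left hi, hi]

theorem idval_injective : Function.Injective (idval M) := M.id_inj

theorem att_staTuple_one (Γ : M.State) : att M (staTuple M Γ) 1 = Sum.inl (idval M Γ) := by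
  simp [att, staTuple, idval, M.m_pos]

theorem mem_proj_one_Sta {u : List (V M)} :
    u ∈ proj M [1] (Sta M) ↔ ∃ Γ : M.State, u = [Sum.inl (idval M Γ)] := by
  simp [proj, Sta, att_staTuple_one]

theorem mem_RelI_of_idval {Γ : M.State} {b : V M} {r : M.RelSym} :
    [Sum.inl (idval M Γ), b, Sum.inr (Sum.inr r)] ∈ RelI M ↔
      ∃ Δ, M.acc r Γ Δ ∧ b = Sum.inl (idval M Δ) := by
  constructor
  · rintro ⟨r', Γ', Δ, hacc, heq⟩
    simp only [List.cons.injEq, Sum.inl.injEq, Sum.inr.injEq, and_true] at heq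
    obtain ⟨hΓ, hb, rfl⟩ := heq
    obtain rfl := idval_injective hΓ
    exact ⟨Δ, hacc, hb⟩
  · rintro ⟨Δ, hacc, rfl⟩
    exact ⟨r, Γ, Δ, hacc, rfl⟩

theorem ofFn_mem_VTl {n : ℕ} {ks : Fin n → VKind} {v : Fin n → V M} :
    List.ofFn v ∈ VTl M (List.ofFn ks) ↔ ∀ j, kindOk M (ks j) (v j) := by
  simp [VTl, List.forall₂_iff_get, Fin.forall_iff]

theorem length_of_mem_ftNot {ks : List VKind} {F : Inst M} {t : List (V M)}
    (ht : t ∈ ftNot ks F) : t.length = ks.length + 1 := by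
  obtain ⟨⟨l, hl, u, hu, rfl⟩, -⟩ := ht
  obtain ⟨Γ, rfl⟩ := mem_proj_one_Sta.1 hu
  simp [List.Forall₂.length_eq hl]

theorem append_idval_mem_ftNot {ks : List VKind} {F : Inst M} {l : List (V M)}
    (hl : l ∈ VTl M ks) (Γ : M.State) :
    l ++ [Sum.inl (idval M Γ)] ∈ ftNot ks F ↔ l ++ [Sum.inl (idval M Γ)] ∉ F :=
  and_iff_right ⟨l, hl, _, mem_proj_one_Sta.2 ⟨Γ, rfl⟩, rfl⟩

theorem mem_ftDia {n : ℕ} {r : M.RelSym} {F : Inst M} (hF : ∀ t ∈ F, t.length = n + 1)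
    {u : List (V M)} :
    u ∈ ftDia n r F ↔ ∃ l a b,
      u = l ++ [a] ∧ l ++ [b] ∈ F ∧ [a, b, Sum.inr (Sum.inr r)] ∈ RelI M := by
  have att_joined (l : List (V M)) (b' a b c : V M) :
      (List.range' 1 l.length ++ [l.length + 2]).map (att M (l ++ [b'] ++ [a, b, c])) = l ++ [a] ∧
      att M (l ++ [b'] ++ [a, b, c]) (l.length + 1) = b' ∧
      att M (l ++ [b'] ++ [a, b, c]) (l.length + 3) = b ∧
      att M (l ++ [b'] ++ [a, b, c]) (l.length + 4) = c := by
    simp only [List.append_assoc, List.map_append, map_att_range'_append]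
    simp [att]
  constructor
  · rintro ⟨_, ⟨⟨⟨t, ht, _, ⟨r', Γ, Δ, hacc, rfl⟩, rfl⟩, hjoin⟩, hrel⟩, rfl⟩
    obtain rfl | ⟨l, b', rfl⟩ := t.eq_nil_or_concat'
    · simpa using hF _ ht
    obtain rfl : l.length = n := by simpa using hF _ ht
    obtain ⟨hproj, hlast, htarget, hsym⟩ := att_joined l b' (Sum.inl (idval M Γ))
      (Sum.inl (idval M Δ)) (Sum.inr (Sum.inr r'))
    obtain rfl : b' = Sum.inl (idval M Δ) := hlast.symm.trans (hjoin.trans htarget)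
    exact ⟨l, _, _, hproj, ht, r', Γ, Δ, hacc, by rw [← hrel, hsym]⟩
  · rintro ⟨l, a, b, rfl, hb, hrel⟩
    obtain rfl : l.length = n := by simpa using hF _ hb
    obtain ⟨hproj, hlast, htarget, hsym⟩ := att_joined l b a b (Sum.inr (Sum.inr r))
    exact ⟨_, ⟨⟨⟨_, hb, _, hrel, rfl⟩, hlast.trans htarget.symm⟩, hsym⟩, hproj.symm⟩

theorem append_idval_mem_ftDia {n : ℕ} {r : M.RelSym} {F : Inst M}
    (hF : ∀ t ∈ F, t.length = n + 1) (l : List (V M)) (Γ : M.State) :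
    l ++ [Sum.inl (idval M Γ)] ∈ ftDia n r F ↔
      ∃ Δ, M.acc r Γ Δ ∧ l ++ [Sum.inl (idval M Δ)] ∈ F := by
  rw [mem_ftDia hF]
  constructor
  · rintro ⟨l', a, b, heq, hb, hrel⟩
    obtain ⟨rfl, ha⟩ := List.append_inj' heq rfl
    obtain rfl := List.singleton_injective ha
    obtain ⟨Δ, hacc, rfl⟩ := mem_RelI_of_idval.1 hrel
    exact ⟨Δ, hacc, hb⟩
  · rintro ⟨Δ, hacc, hΔ⟩
    exact ⟨l, _, _, rfl, hΔ, mem_RelI_of_idval.2 ⟨Δ, hacc, rfl⟩⟩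

end

/-- **box case.** Let `φ(ϱ₁,…,ϱₙ)` be a modal query (semantics `Tφ`,
translation image `Fφ`), `π ∈ Π` an accessibility relation symbol, and suppose
(inductive hypothesis) that for every state `Δ` and assignment `v`: `M,Δ ⊩_v φ` iff
`⟨v(ϱ₁),…,v(ϱₙ), id_Δ⟩ ∈ Fφ`.  Then for every state `Γ` and assignment `v`:
`M,Γ ⊩_v [π]φ` iff `⟨v(ϱ₁),…,v(ϱₙ), id_Γ⟩ ∈ FT(¬⟨π⟩¬φ)(I_M)`, where
`FT(¬ψ) = (VT(ϱ₁,…,ϱₙ) × π₁(Sta)) − FT(ψ)` and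
`FT(⟨π⟩ψ) = π_{1,…,n,n+2} σ_{n+4=π ∧ n+1=n+3}(FT(ψ) × Rel)`. -/
theorem box_case (M : Model) (n : ℕ) (ks : Fin n → VKind) (r : M.RelSym)
    (Tφ : M.State → (Fin n → V M) → Prop) (Fφ : Inst M)
    (IH : ∀ (Δ : M.State) (v : Fin n → V M), (∀ j, kindOk M (ks j) (v j)) →
      (Tφ Δ v ↔ (List.ofFn v ++ [Sum.inl (idval M Δ)]) ∈ Fφ)) :
    ∀ (Γ : M.State) (v : Fin n → V M), (∀ j, kindOk M (ks j) (v j)) →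
      ((∀ Δ : M.State, M.acc r Γ Δ → Tφ Δ v) ↔
        (List.ofFn v ++ [Sum.inl (idval M Γ)]) ∈
          cprod M (VTl M (List.ofFn ks)) (proj M [1] (Sta M)) \
            proj M (List.range' 1 n ++ [n + 2])
              (selC M (n + 4) (Sum.inr (Sum.inr r))
                (selEq M (n + 1) (n + 3)
                  (cprod M (cprod M (VTl M (List.ofFn ks)) (proj M [1] (Sta M)) \ Fφ)
                    (RelI M))))) := by
  intro Γ v hv
  have hvt : List.ofFn v ∈ VTl M (List.ofFn ks) := ofFn_mem_VTl.2 hv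
  have arity : ∀ t ∈ ftNot (List.ofFn ks) Fφ, t.length = n + 1 := fun t ht => by
    simpa using length_of_mem_ftNot ht
  change _ ↔ _ ∈ ftNot (List.ofFn ks) (ftDia n r (ftNot (List.ofFn ks) Fφ))
  calc (∀ Δ, M.acc r Γ Δ → Tφ Δ v)
      ↔ ¬∃ Δ, M.acc r Γ Δ ∧ List.ofFn v ++ [Sum.inl (idval M Δ)] ∉ Fφ := by
        simp only [IH _ v hv, not_exists, not_and, not_not]
    _ ↔ List.ofFn v ++ [Sum.inl (idval M Γ)] ∉ ftDia n r (ftNot (List.ofFn ks) Fφ) := by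
        simp only [append_idval_mem_ftDia arity, append_idval_mem_ftNot hvt]
    _ ↔ _ := (append_idval_mem_ftNot hvt Γ).symm

end KripkeDB
end
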